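/- Define P(t) = [e^{2t}(t³ − 12t² + 54t − 86) − e^t(t³ − 12t² + 16t − 160) − 26t − 74]/(e^t − 1) and Q(t) = 2e^{2t} − e^t(t² − 6t + 18) + 8(t + 2). Then the function t ↦ P(t)/Q(t) is strictly decreasing on (0,∞). -/

import Mathlib

/-- `P(t)` as in the paper. -/
noncomputable def P (t : ℝ) : ℝ :=
  (Real.exp (2 * t) * (t ^ 3 - 12 * t ^ 2 + 54 * t - 86) -
      Real.exp t * (t ^ 3 - 12 * t ^ 2 + 16 * t - 160) - 26 * t - 74) /
    (Real.exp t - 1)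

/-- `Q(t)` as in the paper. -/
noncomputable def Q (t : ℝ) : ℝ :=
  2 * Real.exp (2 * t) - Real.exp t * (t ^ 2 - 6 * t + 18) + 8 * (t + 2)

/-!
Write `P / Q = N / D` with `D = (exp - 1) * Q`. The derivative of this quotient is
`-(N * D' - N' * D) / D ^ 2`, and both `Q` and `N * D' - N' * D` are exponential polynomials
`∑ k, p k t * exp (k * t)`. All their Taylor coefficients at `0` are nonnegative and one is
positive, so both functions are positive on `(0, ∞)`. The `n`-th coefficient is, up to the factor
`1 / n!`, a sum of terms `k ^ n * q k n` with `q k` a polynomial; the terms with large `k` dominate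
as soon as `n ≥ 27`, and the finitely many remaining coefficients are evaluated.
-/

open Real

/-- `f` is everywhere the sum of its exponential generating series `∑ a n * t ^ n / n!`, so that
`a n` is the `n`-th derivative of `f` at `0`. -/
def HasExpGenFun (a : ℕ → ℝ) (f : ℝ → ℝ) : Prop :=
  ∀ t, HasSum (fun n : ℕ => a n * (t ^ n / n.factorial)) (f t)

namespace HasExpGenFun

variable {a b : ℕ → ℝ} {f g : ℝ → ℝ}

theorem add (hf : HasExpGenFun a f) (hg : HasExpGenFun b g) :
    HasExpGenFun (fun n => a n + b n) (fun t => f t + g t) := fun t => by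
  simpa only [add_mul] using (hf t).add (hg t)

theorem const_mul (c : ℝ) (hf : HasExpGenFun a f) :
    HasExpGenFun (fun n => c * a n) (fun t => c * f t) := fun t => by
  simpa only [mul_assoc] using (hf t).mul_left c

theorem sum {ι : Type*} (s : Finset ι) {a : ι → ℕ → ℝ} {f : ι → ℝ → ℝ}
    (h : ∀ i ∈ s, HasExpGenFun (a i) (f i)) :
    HasExpGenFun (fun n => ∑ i ∈ s, a i n) (fun t => ∑ i ∈ s, f i t) := fun t => by
  simpa only [Finset.sum_mul] using hasSum_sum fun i hi => h i hi t

theorem pow_mul (i : ℕ) (hf : HasExpGenFun a f) :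
    HasExpGenFun (fun n => n.descFactorial i * a (n - i)) (fun t => t ^ i * f t) := fun t => by
  have vanish : ∑ n ∈ Finset.range i,
      (n.descFactorial i : ℝ) * a (n - i) * (t ^ n / n.factorial) = 0 :=
    Finset.sum_eq_zero fun n hn => by
      simp [Nat.descFactorial_of_lt (Finset.mem_range.1 hn)]
  rw [← hasSum_nat_add_iff' i, vanish, sub_zero]
  refine ((hf t).mul_left (t ^ i)).congr_fun fun n => ?_
  have factorial_add : ((n + i).factorial : ℝ) = n.factorial * (n + i).descFactorial i := by
    exact_mod_cast (by simpa using (Nat.factorial_mul_descFactorial (Nat.le_add_left i n)).symm)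
  have descFactorial_ne : ((n + i).descFactorial i : ℝ) ≠ 0 := by
    exact_mod_cast (Nat.descFactorial_pos.2 (Nat.le_add_left i n)).ne'
  simp only [factorial_add, Nat.add_sub_cancel]
  field_simp
  ring

theorem exp_mul (k : ℝ) : HasExpGenFun (fun n => k ^ n) (fun t => exp (k * t)) := fun t => by
  rw [exp_eq_exp_ℝ]
  simpa only [mul_pow, mul_div_assoc] using NormedSpace.expSeries_div_hasSum_exp (k * t)

theorem const (c : ℝ) : HasExpGenFun (fun n => c * 0 ^ n) (fun _ => c) := by
  simpa using (exp_mul 0).const_mul c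

theorem sum_pow_mul_exp {k : ℝ} (hk : k ≠ 0) {d : ℕ} (c : Fin d → ℝ) :
    HasExpGenFun (fun n => k ^ n * ∑ i, c i / k ^ (i : ℕ) * ∏ j ∈ Finset.range i, ((n : ℝ) - j))
      (fun t => (∑ i, c i * t ^ (i : ℕ)) * exp (k * t)) := by
  have h := sum Finset.univ fun (i : Fin d) _ => ((exp_mul k).pow_mul i).const_mul (c i)
  convert h using 2 with n t
  · rw [Finset.mul_sum]
    refine Finset.sum_congr rfl fun i _ => ?_
    rw [← descPochhammer_eval_eq_prod_range, descPochhammer_eval_eq_descFactorial]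
    rcases lt_or_ge n i with hn | hn
    · simp [Nat.descFactorial_of_lt hn]
    · rw [pow_sub₀ k hk hn]
      ring
  · simp only [Finset.sum_mul, mul_assoc]

theorem pos (hf : HasExpGenFun a f) (ha : ∀ n, 0 ≤ a n) {m : ℕ} (hm : 0 < a m) {t : ℝ}
    (ht : 0 < t) : 0 < f t :=
  calc 0 < a m * (t ^ m / m.factorial) := by positivity
    _ ≤ f t := le_hasSum (hf t) m fun n _ => mul_nonneg (ha n) (by positivity)

end HasExpGenFun

theorem strictAntiOn_div_of_wronskian_pos {s : Set ℝ} (hs : Convex ℝ s) {f f' g g' : ℝ → ℝ}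
    (hf : ∀ x ∈ s, HasDerivAt f (f' x) x) (hg : ∀ x ∈ s, HasDerivAt g (g' x) x)
    (hg₀ : ∀ x ∈ s, g x ≠ 0) (h : ∀ x ∈ s, 0 < f x * g' x - f' x * g x) :
    StrictAntiOn (fun x => f x / g x) s := by
  have hdiv (x) (hx : x ∈ s) := (hf x hx).fun_div (hg x hx) (hg₀ x hx)
  refine strictAntiOn_of_deriv_neg hs
    (fun x hx => (hdiv x hx).continuousAt.continuousWithinAt) fun x hx => ?_
  have hx := interior_subset hx
  rw [(hdiv x hx).deriv]
  exact div_neg_of_neg_of_pos (by linarith [h x hx]) (sq_pos_of_ne_zero (hg₀ x hx))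

theorem mul_add_mul_nonneg_of_mul_le {R : Type*} [CommRing R] [PartialOrder R] [IsOrderedRing R]
    {x y a b C : R} (ha : 0 ≤ a) (hy : 0 ≤ y) (hxy : C * y ≤ x) (hab : 0 ≤ C * a + b) :
    0 ≤ x * a + y * b :=
  calc 0 ≤ y * (C * a + b) := mul_nonneg hy hab
    _ = C * y * a + y * b := by ring
    _ ≤ x * a + y * b := by gcongr

/-- The numbers `n! * [t ^ n] Q`. -/
noncomputable def qCoeff (n : ℕ) : ℝ :=
  2 ^ n * 2 - (n ^ 2 - 7 * n + 18) + 16 * 0 ^ n + 8 * (n * 0 ^ (n - 1))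

theorem hasExpGenFun_Q : HasExpGenFun qCoeff Q := by
  have h := (((HasExpGenFun.sum_pow_mul_exp two_ne_zero ![2]).add
    (HasExpGenFun.sum_pow_mul_exp one_ne_zero ![-18, 6, -1])).add (.const 16)).add
    (((HasExpGenFun.const 1).pow_mul 1).const_mul 8)
  convert h using 1
  · ext n
    simp only [qCoeff, Fin.sum_univ_one, Fin.sum_univ_three, Matrix.cons_val,
      Fin.coe_ofNat_eq_mod, Finset.prod_range_succ, Finset.prod_range_zero, Nat.descFactorial_one]
    push_cast
    ring
  · ext t
    simp only [Q, Fin.sum_univ_one, Fin.sum_univ_three, Matrix.cons_val,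
      Fin.coe_ofNat_eq_mod, one_mul]
    ring

theorem sq_sub_seven_mul_add_le_two_pow {n : ℕ} (hn : 2 ≤ n) :
    (n : ℝ) ^ 2 - 7 * n + 18 ≤ 2 ^ n * 2 := by
  induction n, hn using Nat.le_induction with
  | base => norm_num
  | succ n _ ih =>
    push_cast
    rw [pow_succ 2]
    nlinarith [sq_nonneg ((n : ℝ) - 9 / 2)]

theorem qCoeff_nonneg (n : ℕ) : 0 ≤ qCoeff n := by
  rcases lt_or_ge n 2 with hn | hn
  · interval_cases n <;> norm_num [qCoeff]
  · have := sq_sub_seven_mul_add_le_two_pow hn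
    have : (0 : ℝ) ≤ 16 * 0 ^ n + 8 * (n * 0 ^ (n - 1)) := by positivity
    unfold qCoeff
    linarith

theorem Q_pos {t : ℝ} (ht : 0 < t) : 0 < Q t :=
  hasExpGenFun_Q.pos qCoeff_nonneg (m := 3) (by norm_num [qCoeff]) ht

/-- The numerator `N` of `P`. -/
noncomputable def pNum (t : ℝ) : ℝ :=
  exp (2 * t) * (t ^ 3 - 12 * t ^ 2 + 54 * t - 86) -
    exp t * (t ^ 3 - 12 * t ^ 2 + 16 * t - 160) - 26 * t - 74

/-- The derivative of `pNum`. -/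
noncomputable def pNumDeriv (t : ℝ) : ℝ :=
  exp (2 * t) * (2 * t ^ 3 - 21 * t ^ 2 + 84 * t - 118) -
    exp t * (t ^ 3 - 9 * t ^ 2 - 8 * t - 144) - 26

/-- The derivative of `Q`. -/
noncomputable def qDeriv (t : ℝ) : ℝ :=
  4 * exp (2 * t) - exp t * (t ^ 2 - 4 * t + 12) + 8

theorem hasDerivAt_exp_two_mul (t : ℝ) : HasDerivAt (fun t => exp (2 * t)) (exp (2 * t) * 2) t := by
  simpa using ((hasDerivAt_id' t).const_mul 2).exp

theorem hasDerivAt_pNum (t : ℝ) : HasDerivAt pNum (pNumDeriv t) t := by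
  have hid := hasDerivAt_id' t
  have hquad := (hid.fun_pow 3).fun_sub ((hid.fun_pow 2).const_mul 12)
  refine (((((hasDerivAt_exp_two_mul t).fun_mul
    ((hquad.fun_add (hid.const_mul 54)).sub_const 86)).fun_sub
    ((hasDerivAt_exp t).fun_mul ((hquad.fun_add (hid.const_mul 16)).sub_const 160))).fun_sub
    (hid.const_mul 26)).sub_const 74).congr_deriv ?_
  simp only [pNumDeriv, Nat.cast_ofNat, Nat.add_one_sub_one]
  ring

theorem hasDerivAt_Q (t : ℝ) : HasDerivAt Q (qDeriv t) t := by
  have hid := hasDerivAt_id' t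
  refine ((((hasDerivAt_exp_two_mul t).const_mul 2).fun_sub ((hasDerivAt_exp t).fun_mul
    (((hid.fun_pow 2).fun_sub (hid.const_mul 6)).add_const 18))).fun_add
    ((hid.add_const 2).const_mul 8)).congr_deriv ?_
  simp only [qDeriv, Nat.cast_ofNat, Nat.add_one_sub_one]
  ring

/-- The Wronskian `N * D' - N' * D` of `N = pNum` and `D = (exp - 1) * Q`, expanded as an
exponential polynomial. -/
noncomputable def wronskian (t : ℝ) : ℝ :=
  176 + (-756 + 228 * t - 40 * t ^ 2 + 38 * t ^ 3 - 8 * t ^ 4) * exp t +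
    (1660 - 228 * t + 356 * t ^ 2 - 88 * t ^ 3 + 17 * t ^ 4) * exp (2 * t) +
    (-2036 + 264 * t - 250 * t ^ 2 + 52 * t ^ 3 - 10 * t ^ 4) * exp (3 * t) +
    (1236 - 420 * t + 132 * t ^ 2 - 16 * t ^ 3 + t ^ 4) * exp (4 * t) +
    (-280 + 156 * t - 30 * t ^ 2 + 2 * t ^ 3) * exp (5 * t)

theorem wronskian_eq (t : ℝ) :
    wronskian t = pNum t * (exp t * Q t + (exp t - 1) * qDeriv t) -
      pNumDeriv t * ((exp t - 1) * Q t) := by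
  have exp_ofNat_mul (k : ℕ) [k.AtLeastTwo] : exp (ofNat(k) * t) = exp t ^ k := exp_nat_mul t k
  simp only [wronskian, pNum, pNumDeriv, Q, qDeriv, exp_ofNat_mul]
  ring

/-- The numbers `n! * [t ^ n] wronskian`, grouped so that the first summand of each bracket
dominates the second. -/
noncomputable def wronskianCoeff (n : ℕ) : ℝ :=
  176 * 0 ^ n +
    (2 ^ n * (17 / 16 * n ^ 4 - 139 / 8 * n ^ 3 + 2139 / 16 * n ^ 2 - 1851 / 8 * n + 1660) +
      1 * (-8 * n ^ 4 + 86 * n ^ 3 - 242 * n ^ 2 + 392 * n - 756)) +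
    (4 ^ n * (1 / 256 * n ^ 4 - 35 / 128 * n ^ 3 + 2315 / 256 * n ^ 2 - 14563 / 128 * n + 1236) +
      3 ^ n * (-10 / 81 * n ^ 4 + 8 / 3 * n ^ 3 - 2828 / 81 * n ^ 2 + 3250 / 27 * n - 2036)) +
    5 ^ n * (2 / 125 * n ^ 3 - 156 / 125 * n ^ 2 + 4054 / 125 * n - 280)

theorem hasExpGenFun_wronskian : HasExpGenFun wronskianCoeff wronskian := by
  have h := (((((HasExpGenFun.const 176).add
    (.sum_pow_mul_exp one_ne_zero ![-756, 228, -40, 38, -8])).add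
    (.sum_pow_mul_exp two_ne_zero ![1660, -228, 356, -88, 17])).add
    (.sum_pow_mul_exp three_ne_zero ![-2036, 264, -250, 52, -10])).add
    (.sum_pow_mul_exp four_ne_zero ![1236, -420, 132, -16, 1])).add
    (.sum_pow_mul_exp (OfNat.ofNat_ne_zero 5) ![-280, 156, -30, 2])
  convert h using 1
  · ext n
    simp only [wronskianCoeff, Fin.sum_univ_four, Fin.sum_univ_five, Matrix.cons_val,
      Fin.coe_ofNat_eq_mod, Finset.prod_range_succ, Finset.prod_range_zero]
    push_cast
    ring
  · ext t
    simp only [wronskian, Fin.sum_univ_four, Fin.sum_univ_five, Matrix.cons_val,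
      Fin.coe_ofNat_eq_mod, one_mul]
    ring

theorem mul_three_pow_le_four_pow {n : ℕ} (hn : 20 ≤ n) : 256 * (3 : ℝ) ^ n ≤ 4 ^ n := by
  induction n, hn using Nat.le_induction with
  | base => norm_num
  | succ n _ ih =>
    rw [pow_succ, pow_succ]
    nlinarith [pow_pos (three_pos (α := ℝ)) n]

theorem wronskianCoeff_nonneg_of_le {n : ℕ} (hn : 27 ≤ n) : 0 ≤ wronskianCoeff n := by
  have two_pow : 16 * (1 : ℝ) ≤ 2 ^ n :=
    calc 16 * (1 : ℝ) = 2 ^ 4 := by norm_num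
      _ ≤ 2 ^ n := pow_le_pow_right₀ one_le_two (by omega)
  have four_pow : 256 * (3 : ℝ) ^ n ≤ 4 ^ n := mul_three_pow_le_four_pow (by omega)
  unfold wronskianCoeff
  refine add_nonneg (add_nonneg (add_nonneg (by positivity)
    (mul_add_mul_nonneg_of_mul_le ?_ zero_le_one two_pow ?_))
    (mul_add_mul_nonneg_of_mul_le ?_ (by positivity) four_pow ?_))
    (mul_nonneg (by positivity) ?_)
  -- As polynomials in `m = n - 27`, the five expressions have nonnegative coefficients.
  all_goals
    obtain ⟨m, rfl⟩ := Nat.exists_eq_add_of_le hn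
    push_cast
    ring_nf
    positivity

theorem wronskianCoeff_nonneg (n : ℕ) : 0 ≤ wronskianCoeff n := by
  rcases lt_or_ge n 27 with hn | hn
  · interval_cases n <;> norm_num [wronskianCoeff]
  · exact wronskianCoeff_nonneg_of_le hn

theorem wronskian_pos {t : ℝ} (ht : 0 < t) : 0 < wronskian t :=
  hasExpGenFun_wronskian.pos wronskianCoeff_nonneg (m := 8) (by norm_num [wronskianCoeff]) ht

theorem stmt_14 : StrictAntiOn (fun t : ℝ => P t / Q t) (Set.Ioi 0) := by
  have quotient_eq : (fun t => P t / Q t) = fun t => pNum t / ((exp t - 1) * Q t) :=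
    funext fun t => div_div (pNum t) (exp t - 1) (Q t)
  rw [quotient_eq]
  refine strictAntiOn_div_of_wronskian_pos (convex_Ioi 0) (fun t _ => hasDerivAt_pNum t)
    (fun t _ => ((hasDerivAt_exp t).sub_const 1).fun_mul (hasDerivAt_Q t))
    (fun t ht => ?_) fun t ht => ?_
  · exact mul_ne_zero (sub_ne_zero.2 (one_lt_exp_iff.2 ht).ne') (Q_pos ht).ne'
  · rw [← wronskian_eq]
    exact wronskian_pos ht
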